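/- Let V : ℝ → ℝ be Borel measurable, locally integrable and nonnegative almost everywhere, and let k ≥ 1. Then there exists a k-partition P of ℝ with Δ(P) = Δ*_k(ℝ) if and only if there exists some k-partition Q of ℝ with Δ(Q) ≤ Σ_V. (This is the paper's Corollary 1.4 for the metric graph G = ℝ.) -/

import Mathlib

open MeasureTheory Set Filter Topology
open scoped ENNReal

/-- Rayleigh quotient of a test function `f` for the Schrödinger form with potential `V`. -/
noncomputable def rayleigh (V : ℝ → ℝ) (f : ℝ → ℝ) : ℝ :=
  (∫ x, ((deriv f x) ^ 2 + V x * (f x) ^ 2)) / (∫ x, (f x) ^ 2)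

/-- `f` is an admissible test function for the closed set `S`: continuously differentiable,
not identically zero, with compact support contained in `S`. -/
def TestFor (S : Set ℝ) (f : ℝ → ℝ) : Prop :=
  ContDiff ℝ 1 f ∧ f ≠ 0 ∧ HasCompactSupport f ∧ tsupport f ⊆ S

/-- Dirichlet ground state energy `λ_V(S)`, with `sInf ∅ = ∞`. -/
noncomputable def lambdaV (V : ℝ → ℝ) (S : Set ℝ) : ℝ≥0∞ :=
  sInf {e : ℝ≥0∞ | ∃ f : ℝ → ℝ, TestFor S f ∧ e = ENNReal.ofReal (rayleigh V f)}

/-- `Σ_V`, the infimum of the essential spectrum of `-d²/dx² + V` on `ℝ`, characterized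
Persson-style as `sup_{R>0} λ_V({|x| ≥ R})`. -/
noncomputable def SigmaV (V : ℝ → ℝ) : ℝ≥0∞ :=
  ⨆ R : ℝ, ⨆ _ : 0 < R, lambdaV V {x : ℝ | R ≤ |x|}

/-- A `k`-partition of `ℝ`: `k` closed connected subsets with nonempty interior whose
pairwise intersections are contained in both frontiers. -/
def IsPartitionR (k : ℕ) (G : Fin k → Set ℝ) : Prop :=
  (∀ i, IsClosed (G i)) ∧ (∀ i, IsConnected (G i)) ∧
    (∀ i, (interior (G i)).Nonempty) ∧
    ∀ i j, i ≠ j → G i ∩ G j ⊆ frontier (G i) ∩ frontier (G j)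

/-- The energy `Δ(P)` of a partition: the maximum of the ground state energies. -/
noncomputable def energyR (V : ℝ → ℝ) {k : ℕ} (G : Fin k → Set ℝ) : ℝ≥0∞ :=
  ⨆ i, lambdaV V (G i)

/-- The infimal `k`-partition energy `Δ*_k(ℝ)`. -/
noncomputable def optEnergyR (V : ℝ → ℝ) (k : ℕ) : ℝ≥0∞ :=
  ⨅ G : {G : Fin k → Set ℝ // IsPartitionR k G}, energyR V G.1

/-!
A diffeomorphism `x ↦ x + h x` with `h` compactly supported and `C¹`-small changes Rayleigh
quotients by a factor close to `1`: the Dirichlet part by the chain rule, and the potential part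
because `(f (x + h x) - f x)² ≤ |h x| ∫ f'²` and `V |h|` has small integral. Hence the endpoints of
an interval can be pushed outwards a little without lowering `λ_V` by much. Endpoints near `±∞` are
controlled by `Σ_V` instead, so `min (λ_V [a, b]) Σ_V` is lower semicontinuous in
`a, b ∈ [-∞, ∞]`, and by compactness the optimal energy is attained as soon as it lies below `Σ_V`.

Conversely, a test function on `{|x| ≥ R}` splits into its restrictions to the two half-lines, so
there are bounded intervals arbitrarily far out whose energy is barely above `Σ_V`; choosing `k`
disjoint ones shows that the optimal energy never exceeds `Σ_V`.
-/

/-- The quadratic form of `-d²/dx² + V`, that is, the numerator of the Rayleigh quotient. -/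
noncomputable def schrodingerForm (V f : ℝ → ℝ) : ℝ :=
  ∫ x, ((deriv f x) ^ 2 + V x * (f x) ^ 2)

section Integrability

variable {V f : ℝ → ℝ}

lemma hasCompactSupport_sq (hfc : HasCompactSupport f) : HasCompactSupport (fun x => f x ^ 2) :=
  hfc.comp_left (g := (· ^ 2)) (zero_pow two_ne_zero)

lemma integrable_sq (hf : Continuous f) (hfc : HasCompactSupport f) :
    Integrable (fun x => f x ^ 2) :=
  (hf.pow 2).integrable_of_hasCompactSupport (hasCompactSupport_sq hfc)

lemma integrable_deriv_sq (hf : ContDiff ℝ 1 f) (hfc : HasCompactSupport f) :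
    Integrable (fun x => deriv f x ^ 2) :=
  integrable_sq (hf.continuous_deriv le_rfl) hfc.deriv

lemma integrable_mul_sq (hloc : LocallyIntegrable V) (hf : Continuous f)
    (hfc : HasCompactSupport f) : Integrable (fun x => V x * f x ^ 2) :=
  hloc.integrable_smul_right_of_hasCompactSupport (hf.pow 2) (hasCompactSupport_sq hfc)

lemma integral_sq_pos (hf : Continuous f) (hfc : HasCompactSupport f) (hf0 : f ≠ 0) :
    0 < ∫ x, f x ^ 2 :=
  have ⟨_, hx⟩ := Function.ne_iff.1 hf0
  (hf.pow 2).integral_pos_of_hasCompactSupport_nonneg_nonzero (hasCompactSupport_sq hfc)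
    (fun _ => sq_nonneg _) (pow_ne_zero 2 hx)

lemma integral_mul_sq_nonneg (hpos : ∀ᵐ x, 0 ≤ V x) (f : ℝ → ℝ) : 0 ≤ ∫ x, V x * f x ^ 2 :=
  integral_nonneg_of_ae (hpos.mono fun _ hx => mul_nonneg hx (sq_nonneg _))

lemma schrodingerForm_eq_add (hloc : LocallyIntegrable V) (hf : ContDiff ℝ 1 f)
    (hfc : HasCompactSupport f) :
    schrodingerForm V f = (∫ x, deriv f x ^ 2) + ∫ x, V x * f x ^ 2 :=
  integral_add (integrable_deriv_sq hf hfc) (integrable_mul_sq hloc hf.continuous hfc)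

lemma schrodingerForm_nonneg (hpos : ∀ᵐ x, 0 ≤ V x) (f : ℝ → ℝ) : 0 ≤ schrodingerForm V f :=
  integral_nonneg_of_ae (hpos.mono fun _ hx =>
    add_nonneg (sq_nonneg _) (mul_nonneg hx (sq_nonneg _)))

lemma integral_deriv_sq_le_schrodingerForm (hloc : LocallyIntegrable V) (hpos : ∀ᵐ x, 0 ≤ V x)
    (hf : ContDiff ℝ 1 f) (hfc : HasCompactSupport f) :
    ∫ x, deriv f x ^ 2 ≤ schrodingerForm V f := by
  rw [schrodingerForm_eq_add hloc hf hfc]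
  exact le_add_of_nonneg_right (integral_mul_sq_nonneg hpos f)

end Integrability

lemma sq_sub_le_abs_sub_mul_integral_deriv_sq {f : ℝ → ℝ} (hf : ContDiff ℝ 1 f)
    (hf' : Integrable (fun x => deriv f x ^ 2)) (x y : ℝ) :
    (f y - f x) ^ 2 ≤ |y - x| * ∫ t, deriv f t ^ 2 := by
  wlog hxy : x < y generalizing x y
  · rcases (not_lt.1 hxy).eq_or_lt with rfl | hyx
    · simp
    · rw [abs_sub_comm, ← neg_sq, neg_sub]
      exact this y x hyx
  have hcont : Continuous (deriv f) := hf.continuous_deriv le_rfl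
  have hftc : ∫ t in x..y, deriv f t = f y - f x :=
    intervalIntegral.integral_deriv_eq_sub (fun t _ => hf.differentiable one_ne_zero t)
      (hcont.intervalIntegrable _ _)
  have hlen : 0 < y - x := sub_pos.2 hxy
  -- the variance of `f'` over `[x, y]` is nonnegative
  set m := (f y - f x) / (y - x) with hm
  have hvar : 0 ≤ (∫ t in x..y, deriv f t ^ 2) - m * (f y - f x) := by
    calc 0 ≤ ∫ t in x..y, (deriv f t - m) ^ 2 :=
          intervalIntegral.integral_nonneg hxy.le fun _ _ => sq_nonneg _
      _ = ∫ t in x..y, (deriv f t ^ 2 - 2 * m * deriv f t + m ^ 2) := by congr! 2; ring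
      _ = (∫ t in x..y, deriv f t ^ 2) - 2 * m * (f y - f x) + (y - x) * m ^ 2 := by
          rw [intervalIntegral.integral_add, intervalIntegral.integral_sub,
            intervalIntegral.integral_const_mul, hftc, intervalIntegral.integral_const,
            smul_eq_mul] <;> apply Continuous.intervalIntegrable <;> fun_prop
      _ = _ := by rw [hm]; field_simp; ring
  have hle : ∫ t in x..y, deriv f t ^ 2 ≤ ∫ t, deriv f t ^ 2 := by
    rw [intervalIntegral.integral_of_le hxy.le]
    exact setIntegral_le_integral hf' (Eventually.of_forall fun _ => sq_nonneg _)
  calc (f y - f x) ^ 2 = (y - x) * (m * (f y - f x)) := by rw [hm]; field_simp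
    _ ≤ (y - x) * ∫ t, deriv f t ^ 2 := by gcongr; linarith
    _ = |y - x| * ∫ t, deriv f t ^ 2 := by rw [abs_of_pos hlen]

namespace TestFor

variable {S T : Set ℝ} {f : ℝ → ℝ}

lemma mono (hf : TestFor S f) (hST : S ⊆ T) : TestFor T f :=
  ⟨hf.1, hf.2.1, hf.2.2.1, hf.2.2.2.trans hST⟩

lemma integral_sq_pos (hf : TestFor S f) : 0 < ∫ x, f x ^ 2 :=
  _root_.integral_sq_pos hf.1.continuous hf.2.2.1 hf.2.1

lemma support_subset_interior (hf : TestFor S f) : Function.support f ⊆ interior S :=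
  interior_maximal ((subset_tsupport f).trans hf.2.2.2) hf.1.continuous.isOpen_support

end TestFor

section GroundStateEnergy

variable {V : ℝ → ℝ} {S T : Set ℝ} {y : ℝ≥0∞}

lemma lambdaV_le {f : ℝ → ℝ} (hf : TestFor S f) :
    lambdaV V S ≤ ENNReal.ofReal (rayleigh V f) :=
  sInf_le ⟨f, hf, rfl⟩

lemma le_lambdaV (h : ∀ f, TestFor S f → y ≤ ENNReal.ofReal (rayleigh V f)) : y ≤ lambdaV V S :=
  le_sInf fun _ ⟨f, hf, he⟩ => he ▸ h f hf

lemma lambdaV_lt_iff :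
    lambdaV V S < y ↔ ∃ f, TestFor S f ∧ ENNReal.ofReal (rayleigh V f) < y :=
  sInf_lt_iff.trans
    ⟨fun ⟨_, ⟨f, hf, he⟩, hlt⟩ => ⟨f, hf, he ▸ hlt⟩, fun ⟨f, hf, hlt⟩ => ⟨_, ⟨f, hf, rfl⟩, hlt⟩⟩

lemma lambdaV_anti (V : ℝ → ℝ) : Antitone (lambdaV V) :=
  fun _ _ hST => le_lambdaV fun _ hf => lambdaV_le (hf.mono hST)

lemma interior_nonempty_of_lambdaV_lt_top (h : lambdaV V S < ⊤) : (interior S).Nonempty := by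
  obtain ⟨f, hf, -⟩ := lambdaV_lt_iff.1 h
  exact (Function.support_nonempty_iff.2 hf.2.1).mono hf.support_subset_interior

lemma exists_lambdaV_inter_Icc_lt (h : lambdaV V S < y) :
    ∃ M, lambdaV V (S ∩ Icc (-M) M) < y := by
  obtain ⟨f, ⟨hf, hf0, hfc, hfS⟩, hlt⟩ := lambdaV_lt_iff.1 h
  obtain ⟨M, hM⟩ := hfc.isCompact.isBounded.subset_closedBall 0
  rw [Real.closedBall_eq_Icc, zero_sub, zero_add] at hM
  exact ⟨M, (lambdaV_le ⟨hf, hf0, hfc, subset_inter hfS hM⟩).trans_lt hlt⟩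

end GroundStateEnergy

lemma inv_sq_le_lambdaV_Icc {V : ℝ → ℝ} (hloc : LocallyIntegrable V) (hpos : ∀ᵐ x, 0 ≤ V x)
    {u v : ℝ} (huv : u ≤ v) :
    (ENNReal.ofReal ((v - u) ^ 2))⁻¹ ≤ lambdaV V (Icc u v) := by
  refine le_lambdaV fun f hf => ?_
  have hzero : ∀ x ∉ Ioo u v, f x = 0 := fun x hx => by
    rw [← interior_Icc] at hx
    exact Function.notMem_support.1 fun h => hx (hf.support_subset_interior h)
  obtain ⟨hf1, -, hfc, -⟩ := id hf
  set D := ∫ t, deriv f t ^ 2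
  have hpoint : ∀ x ∈ Icc u v, f x ^ 2 ≤ (v - u) * D := fun x hx => by
    have hcs := sq_sub_le_abs_sub_mul_integral_deriv_sq hf1 (integrable_deriv_sq hf1 hfc) u x
    rw [hzero u left_notMem_Ioo, sub_zero, abs_of_nonneg (sub_nonneg.2 hx.1)] at hcs
    exact hcs.trans (by gcongr; exact hx.2)
  have hint : ∫ x, f x ^ 2 ≤ (v - u) ^ 2 * D := by
    calc ∫ x, f x ^ 2 = ∫ x in Icc u v, f x ^ 2 :=
          (setIntegral_eq_integral_of_forall_compl_eq_zero fun x hx => by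
            rw [hzero x fun h => hx (Ioo_subset_Icc_self h), zero_pow two_ne_zero]).symm
      _ ≤ ∫ _ in Icc u v, (v - u) * D :=
          setIntegral_mono_on (integrable_sq hf1.continuous hfc).integrableOn
            (integrableOn_const (by simp)) measurableSet_Icc hpoint
      _ = (v - u) ^ 2 * D := by
          rw [setIntegral_const, Real.volume_real_Icc_of_le huv, smul_eq_mul]; ring
  rw [ENNReal.inv_le_iff_le_mul (by simp) (by simp), ← ENNReal.ofReal_mul (sq_nonneg _),
    ENNReal.one_le_ofReal, rayleigh, ← mul_div_assoc, one_le_div hf.integral_sq_pos]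
  exact hint.trans (mul_le_mul_of_nonneg_left
    (integral_deriv_sq_le_schrodingerForm hloc hpos hf1 hfc) (sq_nonneg _))

section Deformation

variable {V f h : ℝ → ℝ} {S : Set ℝ} {δ e : ℝ}

lemma hasDerivAt_id_add (hh : ContDiff ℝ 1 h) (x : ℝ) :
    HasDerivAt (fun x => x + h x) (1 + deriv h x) x :=
  (hasDerivAt_id x).add (hh.differentiable one_ne_zero x).hasDerivAt

lemma strictMono_id_add (hh : ContDiff ℝ 1 h) (hh' : ∀ x, -1 < deriv h x) :
    StrictMono fun x => x + h x :=
  strictMono_of_deriv_pos fun x => by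
    rw [(hasDerivAt_id_add hh x).deriv]; linarith [hh' x]

lemma surjective_id_add (hh : Continuous h) (hhc : HasCompactSupport h) :
    Function.Surjective fun x => x + h x := by
  obtain ⟨C, hC⟩ := hhc.exists_bound_of_continuous hh
  refine (continuous_id.add hh).surjective ?_ ?_
  · exact tendsto_atTop_add_right_of_le _ (-C) tendsto_id fun x => (abs_le.1 (hC x)).1
  · exact tendsto_atBot_add_right_of_ge _ C tendsto_id fun x => (abs_le.1 (hC x)).2

lemma exists_homeomorph_eq_id_add (hh : ContDiff ℝ 1 h) (hhc : HasCompactSupport h)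
    (hh' : ∀ x, -1 < deriv h x) : ∃ φ : ℝ ≃ₜ ℝ, ⇑φ = fun x => x + h x :=
  ⟨((strictMono_id_add hh hh').orderIsoOfSurjective _
    (surjective_id_add hh.continuous hhc)).toHomeomorph, rfl⟩

lemma hasCompactSupport_comp_id_add (hh : ContDiff ℝ 1 h) (hhc : HasCompactSupport h)
    (hh' : ∀ x, -1 < deriv h x) (hfc : HasCompactSupport f) :
    HasCompactSupport fun x => f (x + h x) := by
  obtain ⟨φ, hφ⟩ := exists_homeomorph_eq_id_add hh hhc hh'
  simpa only [hφ, Function.comp_def] using hfc.comp_homeomorph φ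

lemma tsupport_comp_id_add (hh : ContDiff ℝ 1 h) (hhc : HasCompactSupport h)
    (hh' : ∀ x, -1 < deriv h x) :
    tsupport (fun x => f (x + h x)) = (fun x => x + h x) ⁻¹' tsupport f := by
  obtain ⟨φ, hφ⟩ := exists_homeomorph_eq_id_add hh hhc hh'
  simpa only [hφ, Function.comp_def] using tsupport_comp_eq_preimage f φ

lemma TestFor.comp_id_add (hf : TestFor S f) (hh : ContDiff ℝ 1 h) (hhc : HasCompactSupport h)
    (hh' : ∀ x, -1 < deriv h x) :
    TestFor ((fun x => x + h x) ⁻¹' S) fun x => f (x + h x) := by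
  obtain ⟨hf1, hf0, hfc, hfS⟩ := hf
  refine ⟨hf1.comp (contDiff_id.add hh), fun h0 => hf0 ?_,
    hasCompactSupport_comp_id_add hh hhc hh' hfc, ?_⟩
  · exact (surjective_id_add hh.continuous hhc).injective_comp_right h0
  · exact (tsupport_comp_id_add hh hhc hh').trans_subset (preimage_mono hfS)

lemma integral_comp_id_add (hh : ContDiff ℝ 1 h) (hhc : HasCompactSupport h)
    (hh' : ∀ x, -1 < deriv h x) (F : ℝ → ℝ) :
    ∫ x, (1 + deriv h x) * F (x + h x) = ∫ x, F x := by
  have hchange := integral_image_eq_integral_abs_deriv_smul MeasurableSet.univ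
    (fun x _ => (hasDerivAt_id_add hh x).hasDerivWithinAt)
    (strictMono_id_add hh hh').injective.injOn F
  rw [image_univ, (surjective_id_add hh.continuous hhc).range_eq, setIntegral_univ,
    setIntegral_univ] at hchange
  rw [hchange]
  congr! 2 with x
  rw [smul_eq_mul, abs_of_pos (by linarith [hh' x])]

lemma integral_sq_le_mul_integral_comp_id_add_sq (hf : Continuous f) (hfc : HasCompactSupport f)
    (hh : ContDiff ℝ 1 h) (hhc : HasCompactSupport h) (hδ : δ < 1)
    (hh' : ∀ x, |deriv h x| ≤ δ) :
    ∫ x, f x ^ 2 ≤ (1 + δ) * ∫ x, f (x + h x) ^ 2 := by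
  have hgt : ∀ x, -1 < deriv h x := fun x => by linarith [neg_le_of_abs_le (hh' x)]
  rw [← integral_comp_id_add hh hhc hgt (fun x => f x ^ 2), ← integral_const_mul]
  refine integral_mono_of_nonneg (Eventually.of_forall fun x => ?_) ?_
    (Eventually.of_forall fun x => ?_)
  · exact mul_nonneg (by linarith [hgt x]) (sq_nonneg _)
  · exact (integrable_sq (hf.comp (continuous_id.add hh.continuous))
      (hasCompactSupport_comp_id_add hh hhc hgt hfc)).const_mul _
  · exact mul_le_mul_of_nonneg_right (by linarith [le_of_abs_le (hh' x)]) (sq_nonneg _)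

lemma integral_deriv_comp_id_add_sq_le (hf : ContDiff ℝ 1 f) (hfc : HasCompactSupport f)
    (hh : ContDiff ℝ 1 h) (hhc : HasCompactSupport h) (hδ : δ < 1)
    (hh' : ∀ x, |deriv h x| ≤ δ) :
    ∫ x, deriv (fun x => f (x + h x)) x ^ 2 ≤ (1 + δ) * ∫ x, deriv f x ^ 2 := by
  have hgt : ∀ x, -1 < deriv h x := fun x => by linarith [neg_le_of_abs_le (hh' x)]
  have hderiv : ∀ x, deriv (fun x => f (x + h x)) x = deriv f (x + h x) * (1 + deriv h x) :=
    fun x => ((hf.differentiable one_ne_zero _).hasDerivAt.comp x (hasDerivAt_id_add hh x)).deriv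
  rw [← integral_comp_id_add hh hhc hgt (fun x => deriv f x ^ 2), ← integral_const_mul]
  refine integral_mono_of_nonneg (Eventually.of_forall fun x => sq_nonneg _) ?_
    (Eventually.of_forall fun x => ?_)
  · refine (Continuous.integrable_of_hasCompactSupport ?_ ?_).const_mul _
    · have := hf.continuous_deriv le_rfl
      have := hh.continuous
      have := hh.continuous_deriv le_rfl
      fun_prop
    · exact (hasCompactSupport_sq
        (hasCompactSupport_comp_id_add hh hhc hgt hfc.deriv)).mul_left
  · calc deriv (fun x => f (x + h x)) x ^ 2
        = (1 + deriv h x) * ((1 + deriv h x) * deriv f (x + h x) ^ 2) := by rw [hderiv]; ring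
      _ ≤ (1 + δ) * ((1 + deriv h x) * deriv f (x + h x) ^ 2) := by
        have := hgt x
        refine mul_le_mul_of_nonneg_right ?_ (mul_nonneg ?_ (sq_nonneg _))
        · linarith [le_of_abs_le (hh' x)]
        · linarith

lemma integral_mul_comp_id_add_sq_le (hloc : LocallyIntegrable V) (hpos : ∀ᵐ x, 0 ≤ V x)
    (hf : ContDiff ℝ 1 f) (hfc : HasCompactSupport f) (hh : Continuous h)
    (hhc : HasCompactSupport h) (he : 0 < e) :
    ∫ x, V x * f (x + h x) ^ 2 ≤
      (1 + e) * (∫ x, V x * f x ^ 2) +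
        (1 + e⁻¹) * ((∫ x, V x * |h x|) * ∫ x, deriv f x ^ 2) := by
  set D := ∫ x, deriv f x ^ 2
  have hint₁ := (integrable_mul_sq hloc hf.continuous hfc).const_mul (1 + e)
  have hint₂ : Integrable fun x => (1 + e⁻¹) * (V x * |h x| * D) :=
    ((hloc.integrable_smul_right_of_hasCompactSupport hh.abs hhc.norm).mul_const D).const_mul _
  have hpoint : ∀ x, f (x + h x) ^ 2 ≤ (1 + e) * f x ^ 2 + (1 + e⁻¹) * (|h x| * D) := fun x => by
    have hcs := sq_sub_le_abs_sub_mul_integral_deriv_sq hf (integrable_deriv_sq hf hfc) x (x + h x)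
    rw [add_sub_cancel_left] at hcs
    calc f (x + h x) ^ 2
        = f x ^ 2 + 2 * f x * (f (x + h x) - f x) + (f (x + h x) - f x) ^ 2 := by ring
      _ ≤ f x ^ 2 + (e * f x ^ 2 + e⁻¹ * (f (x + h x) - f x) ^ 2) + (f (x + h x) - f x) ^ 2 := by
        gcongr; exact two_mul_le_add_mul_sq he
      _ = (1 + e) * f x ^ 2 + (1 + e⁻¹) * (f (x + h x) - f x) ^ 2 := by ring
      _ ≤ (1 + e) * f x ^ 2 + (1 + e⁻¹) * (|h x| * D) := by gcongr
  calc ∫ x, V x * f (x + h x) ^ 2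
      ≤ ∫ x, ((1 + e) * (V x * f x ^ 2) + (1 + e⁻¹) * (V x * |h x| * D)) := by
        refine integral_mono_of_nonneg ?_ (hint₁.add hint₂) ?_ <;>
          filter_upwards [hpos] with x hx
        · exact mul_nonneg hx (sq_nonneg _)
        · exact (mul_le_mul_of_nonneg_left (hpoint x) hx).trans_eq (by ring)
    _ = _ := by
        rw [integral_add hint₁ hint₂, integral_const_mul, integral_const_mul, integral_mul_const]

lemma rayleigh_comp_id_add_le (hloc : LocallyIntegrable V) (hpos : ∀ᵐ x, 0 ≤ V x)
    (hf : TestFor S f) (hh : ContDiff ℝ 1 h) (hhc : HasCompactSupport h) (hδ : δ < 1)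
    (hh' : ∀ x, |deriv h x| ≤ δ) (he : 0 < e) :
    rayleigh V (fun x => f (x + h x)) ≤
      (1 + δ) * (1 + δ + e + (1 + e⁻¹) * ∫ x, V x * |h x|) * rayleigh V f := by
  have hgt : ∀ x, -1 < deriv h x := fun x => by linarith [neg_le_of_abs_le (hh' x)]
  have hδ0 : 0 ≤ δ := (abs_nonneg _).trans (hh' 0)
  have hg := hf.comp_id_add hh hhc hgt
  obtain ⟨hf1, -, hfc, -⟩ := id hf
  set g := fun x => f (x + h x)
  set A := ∫ x, V x * |h x|
  have hA : 0 ≤ A :=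
    integral_nonneg_of_ae (hpos.mono fun x hx => mul_nonneg hx (abs_nonneg _))
  set κ := 1 + δ + e + (1 + e⁻¹) * A
  have hform : schrodingerForm V g ≤ κ * schrodingerForm V f := by
    rw [schrodingerForm_eq_add hloc hg.1 hg.2.2.1, schrodingerForm_eq_add hloc hf1 hfc]
    have : 0 ≤ ∫ x, deriv f x ^ 2 := integral_nonneg fun _ => sq_nonneg _
    have hW := integral_mul_sq_nonneg hpos f
    have hDg := integral_deriv_comp_id_add_sq_le hf1 hfc hh hhc hδ hh'
    have hWg := integral_mul_comp_id_add_sq_le hloc hpos hf1 hfc hh.continuous hhc he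
    have hrest : 0 ≤ e * (∫ x, deriv f x ^ 2) + (δ + (1 + e⁻¹) * A) * ∫ x, V x * f x ^ 2 := by
      positivity
    calc _ ≤ _ := add_le_add hDg hWg
      _ ≤ κ * ((∫ x, deriv f x ^ 2) + ∫ x, V x * f x ^ 2) := by simp only [κ]; linarith
  have hnorm : ∫ x, f x ^ 2 ≤ (1 + δ) * ∫ x, g x ^ 2 :=
    integral_sq_le_mul_integral_comp_id_add_sq hf1.continuous hfc hh hhc hδ hh'
  have hE := schrodingerForm_nonneg hpos f
  calc rayleigh V g ≤ κ * schrodingerForm V f / ∫ x, g x ^ 2 :=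
        div_le_div_of_nonneg_right hform hg.integral_sq_pos.le
    _ ≤ κ * schrodingerForm V f * ((1 + δ) / ∫ x, f x ^ 2) := by
        rw [div_eq_mul_inv]
        gcongr
        rw [inv_eq_one_div, div_le_div_iff₀ hg.integral_sq_pos hf.integral_sq_pos, one_mul]
        exact hnorm
    _ = (1 + δ) * κ * (schrodingerForm V f / ∫ x, f x ^ 2) := by ring

lemma lambdaV_preimage_id_add_le (hloc : LocallyIntegrable V) (hpos : ∀ᵐ x, 0 ≤ V x)
    (hh : ContDiff ℝ 1 h) (hhc : HasCompactSupport h) (hδ : δ < 1)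
    (hh' : ∀ x, |deriv h x| ≤ δ) (he : 0 < e) :
    lambdaV V ((fun x => x + h x) ⁻¹' S) ≤
      ENNReal.ofReal ((1 + δ) * (1 + δ + e + (1 + e⁻¹) * ∫ x, V x * |h x|)) * lambdaV V S := by
  have hδ0 : 0 ≤ δ := (abs_nonneg _).trans (hh' 0)
  have hA : 0 ≤ ∫ x, V x * |h x| :=
    integral_nonneg_of_ae (hpos.mono fun x hx => mul_nonneg hx (abs_nonneg _))
  have hκ : 0 < (1 + δ) * (1 + δ + e + (1 + e⁻¹) * ∫ x, V x * |h x|) := by positivity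
  rw [← ENNReal.div_le_iff' (by simpa using hκ) ENNReal.ofReal_ne_top]
  refine le_lambdaV fun f hf => ?_
  rw [ENNReal.div_le_iff' (by simpa using hκ) ENNReal.ofReal_ne_top, ← ENNReal.ofReal_mul hκ.le]
  exact (lambdaV_le (hf.comp_id_add hh hhc fun x => by linarith [neg_le_of_abs_le (hh' x)])).trans
    (ENNReal.ofReal_le_ofReal (rayleigh_comp_id_add_le hloc hpos hf hh hhc hδ hh' he))

end Deformation

section ExtIcc

/-- The closed interval of the real numbers lying between the extended real numbers `a` and `b`.
Extended endpoints put bounded intervals, half-lines and the whole line on the same footing, and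
make the space of endpoints compact. -/
def extIcc (a b : EReal) : Set ℝ :=
  ((↑) : ℝ → EReal) ⁻¹' Icc a b

lemma extIcc_mono {a a' b b' : EReal} (ha : a' ≤ a) (hb : b ≤ b') : extIcc a b ⊆ extIcc a' b' :=
  preimage_mono (Icc_subset_Icc ha hb)

lemma isClosed_extIcc (a b : EReal) : IsClosed (extIcc a b) :=
  isClosed_Icc.preimage continuous_coe_real_ereal

lemma ordConnected_extIcc (a b : EReal) : (extIcc a b).OrdConnected :=
  ordConnected_Icc.preimage_mono EReal.coe_strictMono.monotone

lemma extIcc_inter_extIcc_subset_frontier {a b c d : EReal} (hbc : b ≤ c) :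
    extIcc a b ∩ extIcc c d ⊆ frontier (extIcc a b) ∩ frontier (extIcc c d) := by
  rintro x ⟨hx, hx'⟩
  rw [(isClosed_extIcc a b).frontier_eq, (isClosed_extIcc c d).frontier_eq]
  refine ⟨⟨hx, fun hxi => ?_⟩, hx', fun hxi => ?_⟩
  · have hsub : extIcc a b ⊆ Iic x := fun y hy =>
      EReal.coe_le_coe_iff.1 ((hy.2.trans hbc).trans hx'.1)
    simpa using interior_mono hsub hxi
  · have hsub : extIcc c d ⊆ Ici x := fun y hy =>
      EReal.coe_le_coe_iff.1 ((hx.2.trans hbc).trans hy.1)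
    simpa using interior_mono hsub hxi

end ExtIcc

section Semicontinuity

variable {V ψ : ℝ → ℝ}

lemma eventually_lambdaV_preimage_le (hloc : LocallyIntegrable V) (hpos : ∀ᵐ x, 0 ≤ V x)
    (hψ : ContDiff ℝ 1 ψ) (hψc : HasCompactSupport ψ) {κ : ℝ} (hκ : 1 < κ) :
    ∀ᶠ d in 𝓝 (0 : ℝ), StrictMono (fun x => x + d * ψ x) ∧
      ∀ S, lambdaV V ((fun x => x + d * ψ x) ⁻¹' S) ≤ ENNReal.ofReal κ * lambdaV V S := by
  obtain ⟨L, hL⟩ := hψc.deriv.exists_bound_of_continuous (hψ.continuous_deriv le_rfl)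
  set A := ∫ x, V x * |ψ x|
  set e := (κ - 1) / 2
  have he : 0 < e := half_pos (sub_pos.2 hκ)
  have hδ : ∀ᶠ d in 𝓝 (0 : ℝ), |d| * L < 1 :=
    Continuous.tendsto' (by fun_prop) 0 0 (by simp) |>.eventually_lt_const one_pos
  have hfactor : ∀ᶠ d in 𝓝 (0 : ℝ),
      (1 + |d| * L) * (1 + |d| * L + e + (1 + e⁻¹) * (|d| * A)) < κ :=
    Continuous.tendsto' (by fun_prop) 0 (1 + e) (by simp) |>.eventually_lt_const
      (by simp only [e]; linarith)
  filter_upwards [hδ, hfactor] with d hd₁ hd₂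
  have hh : ContDiff ℝ 1 fun x => d * ψ x := contDiff_const.mul hψ
  have hhc : HasCompactSupport fun x => d * ψ x := hψc.mul_left
  have hh' : ∀ x, |deriv (fun x => d * ψ x) x| ≤ |d| * L := fun x => by
    rw [deriv_const_mul_field, abs_mul]
    exact mul_le_mul_of_nonneg_left (hL x) (abs_nonneg d)
  have hA : ∫ x, V x * |d * ψ x| = |d| * A := by
    rw [← integral_const_mul]
    simp only [abs_mul, mul_left_comm]
  refine ⟨strictMono_id_add hh fun x => by linarith [neg_le_of_abs_le (hh' x)], fun S => ?_⟩
  refine (lambdaV_preimage_id_add_le hloc hpos hh hhc hd₁ hh' he).trans ?_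
  rw [hA]
  gcongr

lemma exists_one_lt_ofReal_mul_lt {x y : ℝ≥0∞} (hxy : x < y) :
    ∃ κ : ℝ, 1 < κ ∧ ENNReal.ofReal κ * x < y := by
  have htendsto : Tendsto (fun κ : ℝ => ENNReal.ofReal κ * x) (𝓝[>] 1) (𝓝 x) := by
    have := ENNReal.Tendsto.mul_const (b := x)
      (ENNReal.tendsto_ofReal (tendsto_id (x := 𝓝 (1 : ℝ)))) (Or.inr hxy.ne_top)
    rw [ENNReal.ofReal_one, one_mul] at this
    exact this.mono_left nhdsWithin_le_nhds
  exact (eventually_mem_nhdsWithin.and (htendsto.eventually_lt_const hxy)).exists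

lemma eventually_lt_lambdaV (hloc : LocallyIntegrable V) (hpos : ∀ᵐ x, 0 ≤ V x)
    (hψ : ContDiff ℝ 1 ψ) (hψc : HasCompactSupport ψ) {S : Set ℝ} {y : ℝ≥0∞}
    (hy : y < lambdaV V S) :
    ∀ᶠ d in 𝓝 (0 : ℝ), StrictMono (fun x => x + d * ψ x) ∧
      ∀ T, (fun x => x + d * ψ x) ⁻¹' T ⊆ S → y < lambdaV V T := by
  obtain ⟨κ, hκ, hκy⟩ := exists_one_lt_ofReal_mul_lt hy
  filter_upwards [eventually_lambdaV_preimage_le hloc hpos hψ hψc hκ] with d ⟨hmono, hd⟩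
  refine ⟨hmono, fun T hT => ?_⟩
  have hlt : ENNReal.ofReal κ * y < ENNReal.ofReal κ * lambdaV V T :=
    hκy.trans_le ((lambdaV_anti V hT).trans (hd T))
  exact lt_of_mul_lt_mul_left' hlt

-- The map `x ↦ x + d * ψ x` then carries `u` to `u - d` and `v` to `v + d`.
lemma exists_contDiff_eq_neg_one_eq_one {u v : ℝ} (huv : u < v) :
    ∃ ψ : ℝ → ℝ, ContDiff ℝ 1 ψ ∧ HasCompactSupport ψ ∧ ψ u = -1 ∧ ψ v = 1 := by
  have hlen : 0 < v - u := sub_pos.2 huv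
  let b : ContDiffBump u := ⟨v - u, v - u + 1, hlen, lt_add_one _⟩
  have hbu : b u = 1 := b.one_of_mem_closedBall (Metric.mem_closedBall_self hlen.le)
  have hbv : b v = 1 := b.one_of_mem_closedBall (by
    rw [Metric.mem_closedBall, Real.dist_eq, abs_of_pos hlen])
  refine ⟨fun x => b x * ((2 * x - u - v) / (v - u)), b.contDiff.mul (by fun_prop),
    b.hasCompactSupport.mul_right, ?_, ?_⟩
  · simp only [hbu]; field_simp; ring
  · simp only [hbv]; field_simp; ring

lemma exists_contDiff_eq_neg_one_eq_one_of_ereal {a b : EReal} (hab : a < b) :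
    ∃ ψ : ℝ → ℝ, ContDiff ℝ 1 ψ ∧ HasCompactSupport ψ ∧
      (∀ u : ℝ, a = u → ψ u = -1) ∧ ∀ v : ℝ, b = v → ψ v = 1 := by
  obtain ⟨u, v, huv, hu, hv⟩ : ∃ u v : ℝ, u < v ∧ (∀ r : ℝ, a = r → r = u) ∧
      ∀ r : ℝ, b = r → r = v := by
    induction a with
    | bot =>
      induction b with
      | bot => exact absurd hab not_lt_bot
      | coe v => exact ⟨v - 1, v, by simp, by simp, by simp [eq_comm]⟩
      | top => exact ⟨0, 1, by simp⟩
    | coe u =>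
      induction b with
      | bot => exact absurd hab not_lt_bot
      | coe v => exact ⟨u, v, EReal.coe_lt_coe_iff.1 hab, by simp [eq_comm], by simp [eq_comm]⟩
      | top => exact ⟨u, u + 1, by simp, by simp [eq_comm], by simp⟩
    | top => exact absurd hab not_top_lt
  obtain ⟨ψ, hψ, hψc, hψu, hψv⟩ := exists_contDiff_eq_neg_one_eq_one huv
  exact ⟨ψ, hψ, hψc, fun r hr => hu r hr ▸ hψu, fun r hr => hv r hr ▸ hψv⟩

lemma exists_pos_lt_lambdaV_extIcc_of_lt (hloc : LocallyIntegrable V) (hpos : ∀ᵐ x, 0 ≤ V x)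
    {a b : EReal} {y : ℝ≥0∞} (hab : a < b) (hy : y < lambdaV V (extIcc a b)) :
    ∃ d : ℝ, 0 < d ∧ y < lambdaV V (extIcc (a - d) (b + d)) := by
  obtain ⟨ψ, hψ, hψc, hψa, hψb⟩ := exists_contDiff_eq_neg_one_eq_one_of_ereal hab
  have hsmall := (eventually_lt_lambdaV hloc hpos hψ hψc hy).filter_mono
    (nhdsWithin_le_nhds (s := Ioi 0))
  obtain ⟨d, hd, hmono, hlt⟩ := (eventually_mem_nhdsWithin.and hsmall).exists
  refine ⟨d, hd, hlt _ fun x hx => ⟨?_, ?_⟩⟩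
  · induction a with
    | bot => exact bot_le
    | top => exact absurd hab not_top_lt
    | coe u =>
      have hux : u - d ≤ x + d * ψ x := by exact_mod_cast hx.1
      rw [EReal.coe_le_coe_iff, ← hmono.le_iff_le, hψa u rfl]
      linarith
  · induction b with
    | bot => exact absurd hab not_lt_bot
    | top => exact le_top
    | coe v =>
      have hxv : x + d * ψ x ≤ v + d := by exact_mod_cast hx.2
      rw [EReal.coe_le_coe_iff, ← hmono.le_iff_le, hψb v rfl]
      linarith

lemma exists_pos_lt_lambdaV_Icc_sub_add (hloc : LocallyIntegrable V) (hpos : ∀ᵐ x, 0 ≤ V x)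
    (u : ℝ) {y : ℝ≥0∞} (hy : y < ⊤) : ∃ d : ℝ, 0 < d ∧ y < lambdaV V (Icc (u - d) (u + d)) := by
  have htop : Tendsto (fun d : ℝ => (ENNReal.ofReal ((u + d - (u - d)) ^ 2))⁻¹) (𝓝[>] 0) (𝓝 ⊤) :=
    ((ENNReal.continuous_ofReal.comp (by fun_prop)).inv.tendsto' 0 ⊤ (by simp)).mono_left
      nhdsWithin_le_nhds
  obtain ⟨d, hd, hlt⟩ := (eventually_mem_nhdsWithin.and (htop.eventually_const_lt hy)).exists
  exact ⟨d, hd, hlt.trans_le (inv_sq_le_lambdaV_Icc hloc hpos (by linarith [mem_Ioi.1 hd]))⟩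

lemma exists_pos_lt_lambdaV_extIcc (hloc : LocallyIntegrable V) (hpos : ∀ᵐ x, 0 ≤ V x)
    {a b : EReal} {y : ℝ≥0∞} (ha : a ≠ ⊤) (hb : b ≠ ⊥) (hy : y < lambdaV V (extIcc a b)) :
    ∃ d : ℝ, 0 < d ∧ y < lambdaV V (extIcc (a - d) (b + d)) := by
  rcases lt_or_ge a b with hab | hba
  · exact exists_pos_lt_lambdaV_extIcc_of_lt hloc hpos hab hy
  · lift a to ℝ using ⟨ha, ne_bot_of_le_ne_bot hb hba⟩
    obtain ⟨d, hd, hlt⟩ := exists_pos_lt_lambdaV_Icc_sub_add hloc hpos a hy.lt_top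
    refine ⟨d, hd, hlt.trans_le (lambdaV_anti V fun x hx => ⟨?_, ?_⟩)⟩
    · exact_mod_cast hx.1
    · exact_mod_cast hx.2.trans (add_le_add_left hba _)

lemma exists_lt_lambdaV_extIcc_of_lt_SigmaV (hloc : LocallyIntegrable V)
    (hpos : ∀ᵐ x, 0 ≤ V x) {a b : EReal} {y : ℝ≥0∞} (hy : y < lambdaV V (extIcc a b))
    (hyS : y < SigmaV V) :
    ∃ a₀ b₀ : EReal, Ici a₀ ∈ 𝓝 a ∧ Iic b₀ ∈ 𝓝 b ∧ y < lambdaV V (extIcc a₀ b₀) := by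
  simp only [SigmaV, lt_iSup_iff] at hyS
  obtain ⟨R, -, hyR⟩ := hyS
  rcases eq_or_ne a ⊤ with rfl | ha
  · refine ⟨R, ⊤, Ici_mem_nhds (EReal.coe_lt_top R), by simp,
      hyR.trans_le (lambdaV_anti V fun x hx => ?_)⟩
    exact (EReal.coe_le_coe_iff.1 hx.1).trans (le_abs_self x)
  rcases eq_or_ne b ⊥ with rfl | hb
  · refine ⟨⊥, (-R : ℝ), by simp, Iic_mem_nhds (EReal.bot_lt_coe _),
      hyR.trans_le (lambdaV_anti V fun x hx => ?_)⟩
    exact (le_neg_of_le_neg (EReal.coe_le_coe_iff.1 hx.2)).trans (neg_le_abs x)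
  obtain ⟨d, hd, hlt⟩ := exists_pos_lt_lambdaV_extIcc hloc hpos ha hb hy
  refine ⟨a - d, b + d, ?_, ?_, hlt⟩
  · induction a with
    | bot => simp
    | top => exact absurd rfl ha
    | coe u => exact Ici_mem_nhds (by exact_mod_cast sub_lt_self u hd)
  · induction b with
    | bot => exact absurd rfl hb
    | top => simp
    | coe v => exact Iic_mem_nhds (by exact_mod_cast lt_add_of_pos_right v hd)

-- Truncating at `Σ_V` is what saves semicontinuity for intervals that escape to infinity.
lemma lowerSemicontinuous_min_lambdaV_extIcc_SigmaV (hloc : LocallyIntegrable V)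
    (hpos : ∀ᵐ x, 0 ≤ V x) :
    LowerSemicontinuous fun q : EReal × EReal => min (lambdaV V (extIcc q.1 q.2)) (SigmaV V) := by
  rintro ⟨a, b⟩ y hy
  obtain ⟨hyI, hyS⟩ := lt_min_iff.1 hy
  obtain ⟨a₀, b₀, ha₀, hb₀, hlt⟩ := exists_lt_lambdaV_extIcc_of_lt_SigmaV hloc hpos hyI hyS
  filter_upwards [prod_mem_nhds ha₀ hb₀] with q hq
  exact lt_min (hlt.trans_le (lambdaV_anti V (extIcc_mono hq.1 hq.2))) hyS

end Semicontinuity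

section Partition

variable {V : ℝ → ℝ} {k : ℕ}

lemma isPartitionR_of_ordConnected {G : Fin k → Set ℝ} (hclosed : ∀ i, IsClosed (G i))
    (hord : ∀ i, (G i).OrdConnected) (hint : ∀ i, (interior (G i)).Nonempty)
    (hG : ∀ i j, i ≠ j → G i ∩ G j ⊆ frontier (G i) ∩ frontier (G j)) : IsPartitionR k G :=
  ⟨hclosed, fun i => ⟨(hint i).mono interior_subset, (hord i).isPreconnected⟩, hint, hG⟩

lemma optEnergyR_le {G : Fin k → Set ℝ} (hG : IsPartitionR k G) : optEnergyR V k ≤ energyR V G :=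
  iInf_le (fun G : {G : Fin k → Set ℝ // IsPartitionR k G} => energyR V G.1) ⟨G, hG⟩

lemma forall_lt_or_forall_gt_of_disjoint {α : Type*} [LinearOrder α] {A B : Set α}
    (hA : A.OrdConnected) (hB : B.OrdConnected) (hAB : Disjoint A B) :
    (∀ x ∈ A, ∀ y ∈ B, x < y) ∨ ∀ x ∈ A, ∀ y ∈ B, y < x := by
  by_contra! ⟨⟨x₁, hx₁, y₁, hy₁, hyx⟩, x₂, hx₂, y₂, hy₂, hxy⟩
  rcases le_total x₂ y₁ with h | h
  · exact disjoint_left.1 hAB (hA.out hx₂ hx₁ ⟨h, hyx⟩) hy₁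
  · exact disjoint_left.1 hAB hx₂ (hB.out hy₁ hy₂ ⟨h, hxy⟩)

lemma IsPartitionR.le_or_le {G : Fin k → Set ℝ} (hG : IsPartitionR k G) {i j : Fin k}
    (hij : i ≠ j) : (∀ x ∈ G i, ∀ y ∈ G j, x ≤ y) ∨ ∀ x ∈ G i, ∀ y ∈ G j, y ≤ x := by
  obtain ⟨-, hconn, hint, hfront⟩ := hG
  have hord : ∀ l, (G l).OrdConnected := fun l => (hconn l).isPreconnected.ordConnected
  have hdisj : Disjoint (G i) (interior (G j)) := disjoint_left.2 fun x hxi hxj =>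
    (hfront i j hij ⟨hxi, interior_subset hxj⟩).2.2 hxj
  have hdense : G j ⊆ closure (interior (G j)) := by
    rw [((hord j).convex : Convex ℝ (G j)).closure_interior_eq_closure_of_nonempty_interior
      (hint j)]
    exact subset_closure
  refine (forall_lt_or_forall_gt_of_disjoint (hord i) (hord j).interior hdisj).imp ?_ ?_ <;>
    intro hlt x hx y hy
  · exact closure_minimal (fun z hz => (hlt x hx z hz).le) isClosed_Ici (hdense hy)
  · exact closure_minimal (fun z hz => (hlt x hx z hz).le) isClosed_Iic (hdense hy)

/-- The endpoints of `k` extended intervals that lie side by side on the line in some order.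
The intervals may be empty or reduced to a point, so that this set is compact. -/
def orderedEndpoints (k : ℕ) : Set (Fin k → EReal × EReal) :=
  {q | ∀ i j, i ≠ j → (q i).2 ≤ (q j).1 ∨ (q j).2 ≤ (q i).1}

lemma isCompact_orderedEndpoints (k : ℕ) : IsCompact (orderedEndpoints k) := by
  have hle : ∀ i j, IsClosed {q : Fin k → EReal × EReal | (q i).2 ≤ (q j).1} := fun i j =>
    isClosed_le (by fun_prop) (by fun_prop)
  refine IsClosed.isCompact ?_
  simp only [orderedEndpoints, ofPred_forall]
  exact isClosed_iInter fun i => isClosed_iInter fun j => isClosed_iInter fun _ =>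
    (hle i j).union (hle j i)

lemma IsPartitionR.exists_orderedEndpoints {G : Fin k → Set ℝ} (hG : IsPartitionR k G) :
    ∃ q ∈ orderedEndpoints k, ∀ i, G i ⊆ extIcc (q i).1 (q i).2 := by
  refine ⟨fun i => (⨅ x ∈ G i, (x : EReal), ⨆ x ∈ G i, (x : EReal)), fun i j hij => ?_,
    fun i x hx => ⟨iInf₂_le x hx, le_iSup₂ (f := fun (y : ℝ) (_ : y ∈ G i) => (y : EReal)) x hx⟩⟩
  refine (hG.le_or_le hij).imp (fun hle => ?_) fun hle => ?_
  · exact iSup₂_le fun x hx => le_iInf₂ fun y hy => EReal.coe_le_coe_iff.2 (hle x hx y hy)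
  · exact iSup₂_le fun y hy => le_iInf₂ fun x hx => EReal.coe_le_coe_iff.2 (hle x hx y hy)

lemma isPartitionR_extIcc {q : Fin k → EReal × EReal} (hq : q ∈ orderedEndpoints k)
    (hint : ∀ i, (interior (extIcc (q i).1 (q i).2)).Nonempty) :
    IsPartitionR k fun i => extIcc (q i).1 (q i).2 := by
  refine isPartitionR_of_ordConnected (fun _ => isClosed_extIcc _ _)
    (fun _ => ordConnected_extIcc _ _) hint fun i j hij => ?_
  rcases hq i j hij with h | h
  · exact extIcc_inter_extIcc_subset_frontier h
  · rw [inter_comm, inter_comm (frontier _)]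
    exact extIcc_inter_extIcc_subset_frontier h

theorem exists_energyR_eq_optEnergyR (hloc : LocallyIntegrable V) (hpos : ∀ᵐ x, 0 ≤ V x)
    (hlt : optEnergyR V k < SigmaV V) :
    ∃ G : Fin k → Set ℝ, IsPartitionR k G ∧ energyR V G = optEnergyR V k := by
  set Φ : (Fin k → EReal × EReal) → ℝ≥0∞ := fun q =>
    ⨆ i, min (lambdaV V (extIcc (q i).1 (q i).2)) (SigmaV V)
  have hΦ : LowerSemicontinuous Φ := lowerSemicontinuous_iSup fun i =>
    (lowerSemicontinuous_min_lambdaV_extIcc_SigmaV hloc hpos).comp (continuous_apply i)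
  have hΦ_le : ∀ G, IsPartitionR k G → ∃ q ∈ orderedEndpoints k, Φ q ≤ energyR V G :=
    fun G hG => by
      obtain ⟨q, hq, hGq⟩ := hG.exists_orderedEndpoints
      exact ⟨q, hq, iSup_mono fun i => (min_le_left _ _).trans (lambdaV_anti V (hGq i))⟩
  obtain ⟨⟨G₀, hG₀⟩, -⟩ := iInf_lt_iff.1 hlt
  obtain ⟨q₀, hq₀, -⟩ := hΦ_le G₀ hG₀
  obtain ⟨q, hq, hmin⟩ := (hΦ.lowerSemicontinuousOn _).exists_isMinOn ⟨q₀, hq₀⟩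
    (isCompact_orderedEndpoints k)
  have hopt : Φ q ≤ optEnergyR V k := le_iInf fun ⟨G, hG⟩ => by
    obtain ⟨q', hq', hle⟩ := hΦ_le G hG
    exact (isMinOn_iff.1 hmin q' hq').trans hle
  have hcell : ∀ i, lambdaV V (extIcc (q i).1 (q i).2) < SigmaV V ∧
      lambdaV V (extIcc (q i).1 (q i).2) ≤ Φ q := fun i => by
    have hle := le_iSup (fun i => min (lambdaV V (extIcc (q i).1 (q i).2)) (SigmaV V)) i
    have hltS := (min_lt_iff.1 ((hle.trans hopt).trans_lt hlt)).resolve_right (lt_irrefl _)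
    exact ⟨hltS, (min_eq_left hltS.le).symm.trans_le hle⟩
  have hpart := isPartitionR_extIcc hq fun i =>
    interior_nonempty_of_lambdaV_lt_top ((hcell i).1.trans_le le_top)
  exact ⟨_, hpart, ((iSup_le fun i => (hcell i).2).trans hopt).antisymm (optEnergyR_le hpart)⟩

end Partition

section Union

variable {V f : ℝ → ℝ} {S T : Set ℝ}

lemma lambdaV_mul_integral_sq_le (hf : ContDiff ℝ 1 f) (hfc : HasCompactSupport f)
    (hfS : tsupport f ⊆ S) :
    lambdaV V S * ENNReal.ofReal (∫ x, f x ^ 2) ≤ ENNReal.ofReal (schrodingerForm V f) := by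
  rcases eq_or_ne f 0 with rfl | hf0
  · simp
  have htest : TestFor S f := ⟨hf, hf0, hfc, hfS⟩
  rw [← ENNReal.le_div_iff_mul_le (by simp [htest.integral_sq_pos]) (by simp),
    ← ENNReal.ofReal_div_of_pos htest.integral_sq_pos]
  exact lambdaV_le htest

lemma indicator_eventuallyEq_of_mem (hT : IsClosed T) (hST : Disjoint S T)
    (hfST : tsupport f ⊆ S ∪ T) {x : ℝ} (hx : x ∈ S) : S.indicator f =ᶠ[𝓝 x] f := by
  filter_upwards [hT.isOpen_compl.mem_nhds (disjoint_left.1 hST hx)] with z hz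
  refine indicator_apply_eq_self.2 fun hzS => ?_
  exact image_eq_zero_of_notMem_tsupport fun h => (hfST h).elim hzS hz

lemma indicator_eventuallyEq_zero_of_notMem (hS : IsClosed S) {x : ℝ} (hx : x ∉ S) :
    S.indicator f =ᶠ[𝓝 x] 0 := by
  filter_upwards [hS.isOpen_compl.mem_nhds hx] with z hz
  exact indicator_of_notMem hz f

lemma contDiff_indicator (hS : IsClosed S) (hT : IsClosed T) (hST : Disjoint S T)
    (hfST : tsupport f ⊆ S ∪ T) (hf : ContDiff ℝ 1 f) : ContDiff ℝ 1 (S.indicator f) :=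
  contDiff_iff_contDiffAt.2 fun x => by
    by_cases hx : x ∈ S
    · exact hf.contDiffAt.congr_of_eventuallyEq (indicator_eventuallyEq_of_mem hT hST hfST hx)
    · exact contDiffAt_const.congr_of_eventuallyEq (indicator_eventuallyEq_zero_of_notMem hS hx)

lemma schrodingerForm_indicator (hS : IsClosed S) (hT : IsClosed T) (hST : Disjoint S T)
    (hfST : tsupport f ⊆ S ∪ T) :
    schrodingerForm V (S.indicator f) = ∫ x in S, (deriv f x ^ 2 + V x * f x ^ 2) := by
  rw [schrodingerForm, ← integral_indicator hS.measurableSet]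
  congr 1; ext x
  by_cases hx : x ∈ S
  · rw [(indicator_eventuallyEq_of_mem hT hST hfST hx).deriv_eq]
    simp only [indicator_of_mem hx]
  · rw [(indicator_eventuallyEq_zero_of_notMem hS hx).deriv_eq]
    simp [indicator_of_notMem hx]

lemma integral_indicator_sq (hS : MeasurableSet S) (f : ℝ → ℝ) :
    ∫ x, S.indicator f x ^ 2 = ∫ x in S, f x ^ 2 := by
  rw [← integral_indicator hS]
  congr 1; ext x
  by_cases hx : x ∈ S <;> simp [hx]

lemma setIntegral_add_setIntegral_of_disjoint {F : ℝ → ℝ} (hF : Integrable F)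
    (hT : MeasurableSet T) (hST : Disjoint S T) (hzero : ∀ x ∉ S ∪ T, F x = 0) :
    (∫ x in S, F x) + ∫ x in T, F x = ∫ x, F x := by
  rw [← setIntegral_union hST hT hF.integrableOn hF.integrableOn]
  exact setIntegral_eq_integral_of_forall_compl_eq_zero hzero

lemma schrodingerForm_indicator_add (hloc : LocallyIntegrable V) (hf : ContDiff ℝ 1 f)
    (hfc : HasCompactSupport f) (hS : IsClosed S) (hT : IsClosed T) (hST : Disjoint S T)
    (hfST : tsupport f ⊆ S ∪ T) :
    schrodingerForm V (S.indicator f) + schrodingerForm V (T.indicator f) =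
      schrodingerForm V f := by
  rw [schrodingerForm_indicator hS hT hST hfST,
    schrodingerForm_indicator hT hS hST.symm (union_comm S T ▸ hfST)]
  refine setIntegral_add_setIntegral_of_disjoint
    ((integrable_deriv_sq hf hfc).add (integrable_mul_sq hloc hf.continuous hfc)) hT.measurableSet
    hST ?_
  intro x hx
  rw [image_eq_zero_of_notMem_tsupport fun h => hx (hfST h),
    image_eq_zero_of_notMem_tsupport fun h => hx (hfST (tsupport_deriv_subset h))]
  ring

lemma integral_indicator_sq_add (hf : Continuous f) (hfc : HasCompactSupport f)
    (hS : IsClosed S) (hT : IsClosed T) (hST : Disjoint S T) (hfST : tsupport f ⊆ S ∪ T) :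
    (∫ x, S.indicator f x ^ 2) + ∫ x, T.indicator f x ^ 2 = ∫ x, f x ^ 2 := by
  rw [integral_indicator_sq hS.measurableSet, integral_indicator_sq hT.measurableSet]
  refine setIntegral_add_setIntegral_of_disjoint (integrable_sq hf hfc) hT.measurableSet
    hST fun x hx => ?_
  rw [image_eq_zero_of_notMem_tsupport fun h => hx (hfST h), zero_pow two_ne_zero]

lemma lambdaV_mul_integral_indicator_sq_le (hS : IsClosed S) (hT : IsClosed T) (hST : Disjoint S T)
    (hfST : tsupport f ⊆ S ∪ T) (hf : ContDiff ℝ 1 f) (hfc : HasCompactSupport f) :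
    lambdaV V S * ENNReal.ofReal (∫ x, S.indicator f x ^ 2) ≤
      ENNReal.ofReal (schrodingerForm V (S.indicator f)) :=
  lambdaV_mul_integral_sq_le (contDiff_indicator hS hT hST hfST hf)
    (hfc.mono (by simp))
    (closure_minimal support_indicator_subset hS)

theorem min_lambdaV_le_lambdaV_union (hloc : LocallyIntegrable V) (hpos : ∀ᵐ x, 0 ≤ V x)
    (hS : IsClosed S) (hT : IsClosed T) (hST : Disjoint S T) :
    min (lambdaV V S) (lambdaV V T) ≤ lambdaV V (S ∪ T) := by
  refine le_lambdaV fun f hf => ?_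
  obtain ⟨hf1, -, hfc, hfST⟩ := id hf
  have hfTS : tsupport f ⊆ T ∪ S := union_comm S T ▸ hfST
  set m := min (lambdaV V S) (lambdaV V T)
  rw [rayleigh, ENNReal.ofReal_div_of_pos hf.integral_sq_pos,
    ENNReal.le_div_iff_mul_le (by simp [hf.integral_sq_pos]) (by simp)]
  calc m * ENNReal.ofReal (∫ x, f x ^ 2)
      = m * ENNReal.ofReal (∫ x, S.indicator f x ^ 2) +
          m * ENNReal.ofReal (∫ x, T.indicator f x ^ 2) := by
        rw [← integral_indicator_sq_add hf1.continuous hfc hS hT hST hfST,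
          ENNReal.ofReal_add (integral_nonneg fun _ => sq_nonneg _)
            (integral_nonneg fun _ => sq_nonneg _), mul_add]
    _ ≤ lambdaV V S * ENNReal.ofReal (∫ x, S.indicator f x ^ 2) +
          lambdaV V T * ENNReal.ofReal (∫ x, T.indicator f x ^ 2) := by
        gcongr
        exacts [min_le_left _ _, min_le_right _ _]
    _ ≤ ENNReal.ofReal (schrodingerForm V (S.indicator f)) +
          ENNReal.ofReal (schrodingerForm V (T.indicator f)) :=
        add_le_add (lambdaV_mul_integral_indicator_sq_le hS hT hST hfST hf1 hfc)
          (lambdaV_mul_integral_indicator_sq_le hT hS hST.symm hfTS hf1 hfc)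
    _ = ENNReal.ofReal (schrodingerForm V f) := by
        rw [← ENNReal.ofReal_add (schrodingerForm_nonneg hpos _) (schrodingerForm_nonneg hpos _),
          schrodingerForm_indicator_add hloc hf1 hfc hS hT hST hfST]

end Union

section EssentialSpectrum

variable {V : ℝ → ℝ} {y : ℝ≥0∞}

lemma exists_isCompact_lambdaV_lt (hloc : LocallyIntegrable V) (hpos : ∀ᵐ x, 0 ≤ V x) {R : ℝ}
    (hR : 0 < R) (hy : lambdaV V {x : ℝ | R ≤ |x|} < y) :
    ∃ K, (IsCompact K ∧ K.OrdConnected ∧ lambdaV V K < y) ∧ K ⊆ {x : ℝ | R ≤ |x|} := by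
  have hunion : {x : ℝ | R ≤ |x|} = Iic (-R) ∪ Ici R := by
    ext x; simp only [mem_ofPred_eq, le_abs, mem_union, mem_Iic, mem_Ici, le_neg, or_comm]
  have hdisj : Disjoint (Iic (-R)) (Ici R) :=
    disjoint_left.2 fun x hx hx' => by linarith [mem_Iic.1 hx, mem_Ici.1 hx']
  obtain ⟨H, hH, hHc, hHo, hHy⟩ : ∃ H ⊆ {x : ℝ | R ≤ |x|}, IsClosed H ∧ H.OrdConnected ∧
      lambdaV V H < y := by
    rw [hunion] at hy ⊢
    rcases min_lt_iff.1 ((min_lambdaV_le_lambdaV_union hloc hpos isClosed_Iic isClosed_Ici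
      hdisj).trans_lt hy) with h | h
    · exact ⟨_, subset_union_left, isClosed_Iic, ordConnected_Iic, h⟩
    · exact ⟨_, subset_union_right, isClosed_Ici, ordConnected_Ici, h⟩
  obtain ⟨M, hM⟩ := exists_lambdaV_inter_Icc_lt hHy
  exact ⟨H ∩ Icc (-M) M, ⟨isCompact_Icc.inter_left hHc, hHo.inter ordConnected_Icc, hM⟩,
    inter_subset_left.trans hH⟩

lemma exists_seq_pairwise_disjoint_lambdaV_lt (hloc : LocallyIntegrable V)
    (hpos : ∀ᵐ x, 0 ≤ V x) (hy : SigmaV V < y) :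
    ∃ K : ℕ → Set ℝ, (∀ n, IsCompact (K n) ∧ (K n).OrdConnected ∧ lambdaV V (K n) < y) ∧
      Pairwise (Function.onFun Disjoint K) := by
  refine exists_seq_of_forall_finset_exists'
    (fun K : Set ℝ => IsCompact K ∧ K.OrdConnected ∧ lambdaV V K < y) Disjoint fun s hs => ?_
  have hbdd := (s.isCompact_biUnion fun K hK => (hs K hK).1).isBounded
  obtain ⟨R, hR, hsR⟩ := hbdd.subset_ball_lt 0 0
  have hyR : lambdaV V {x : ℝ | R ≤ |x|} < y :=
    (le_iSup₂ (f := fun (R : ℝ) (_ : 0 < R) => lambdaV V {x : ℝ | R ≤ |x|}) R hR).trans_lt hy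
  obtain ⟨K, hK, hKR⟩ := exists_isCompact_lambdaV_lt hloc hpos hR hyR
  refine ⟨K, hK, fun K' hK' => disjoint_left.2 fun x hx' hx => ?_⟩
  have hxR := hsR (mem_biUnion hK' hx')
  rw [mem_ball_zero_iff, Real.norm_eq_abs] at hxR
  exact hxR.not_ge (hKR hx)

theorem optEnergyR_le_SigmaV (hloc : LocallyIntegrable V) (hpos : ∀ᵐ x, 0 ≤ V x) (k : ℕ) :
    optEnergyR V k ≤ SigmaV V := by
  refine le_of_forall_gt_imp_ge_of_dense fun y hy => ?_
  obtain ⟨K, hK, hdisj⟩ := exists_seq_pairwise_disjoint_lambdaV_lt hloc hpos hy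
  have hpart : IsPartitionR k fun i => K i := isPartitionR_of_ordConnected
    (fun i => (hK i).1.isClosed) (fun i => (hK i).2.1)
    (fun i => interior_nonempty_of_lambdaV_lt_top ((hK i).2.2.trans_le le_top))
    fun i j hij => by
      rw [(hdisj (Fin.val_injective.ne hij)).inter_eq]
      exact empty_subset _
  exact (optEnergyR_le hpart).trans (iSup_le fun i => (hK i).2.2.le)

end EssentialSpectrum

/-- **Corollary 1.4 for `G = ℝ`.** A spectral minimal `k`-partition of `ℝ` exists if and only
if there is some `k`-partition whose energy is at most `Σ_V`. -/
theorem exists_minimal_partition_iff (V : ℝ → ℝ) (hmeas : Measurable V)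
    (hloc : LocallyIntegrable V) (hpos : ∀ᵐ x ∂(volume : Measure ℝ), 0 ≤ V x)
    (k : ℕ) (hk : 1 ≤ k) :
    (∃ G : Fin k → Set ℝ, IsPartitionR k G ∧ energyR V G = optEnergyR V k) ↔
      (∃ G : Fin k → Set ℝ, IsPartitionR k G ∧ energyR V G ≤ SigmaV V) := by
  refine ⟨fun ⟨G, hG, hopt⟩ => ⟨G, hG, hopt.trans_le (optEnergyR_le_SigmaV hloc hpos k)⟩, ?_⟩
  rintro ⟨Q, hQ, hQS⟩
  rcases lt_or_ge (optEnergyR V k) (SigmaV V) with hlt | hge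
  · exact exists_energyR_eq_optEnergyR hloc hpos hlt
  · exact ⟨Q, hQ, (hQS.trans hge).antisymm (optEnergyR_le hQ)⟩
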